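/- arXiv:2310.01191 — 5 statements merged into one kernel-verified Lean document; each statement's English description precedes it below -/
import Mathlib

section
/- For every N ≥ 1 and every N×N real matrix M, M commutes with the linear chain matrix H_l if and only if there exist real coefficients c_0, …, c_{N-1} such that M = Σ_{n=0}^{N-1} c_n · P_n(𝓗), where 𝓗 = H_l + 2·I and P_n is the polynomial determined by P_n(2x) = U_n(x) with U_n the n-th Chebyshev polynomial of the second kind. -/
/-!
Write `A = Hl N + 2 • 1`; it has the same commutant as `Hl N`. Since `A` sends the basis vector
`e (k + 1)` to `e (k + 2) + e k` and `e 0` to `e 1`, the Chebyshev recurrence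
`P (k + 2) = X * P (k + 1) - P k` gives `P n (A) (e 0) = e n` for `n < N`
(`aeval_P_mulVec_basisVec`), so `e 0` is a cyclic vector for `A`. If `M` commutes with `A`, let
`c n` be the coordinates of `M (e 0)`. Then `D = M - ∑ c n • P n (A)` commutes with `A` and kills
`e 0`, so `D (e n) = P n (A) (D (e 0)) = 0` for every `n`, that is, `D = 0`. The converse holds
because polynomials in `A` commute with `A`.
-/

open Matrix Polynomial

/-- The linear harmonic chain matrix. -/
def Hl (N : ℕ) : Matrix (Fin N) (Fin N) ℝ := fun i j =>
  if i = j then -2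
  else if (i : ℕ) = (j : ℕ) + 1 ∨ (j : ℕ) = (i : ℕ) + 1 then 1 else 0

/-- The dilated Chebyshev polynomial of the second kind, characterized by
`P n (2 * x) = U n x`; concretely `P n = (U n).comp ((1/2) • X)`. -/
noncomputable def P (n : ℕ) : Polynomial ℝ :=
  (Polynomial.Chebyshev.U ℝ n).comp (Polynomial.C (2 : ℝ)⁻¹ * Polynomial.X)

/-- The `k`-th standard basis vector of `ℝ^N`, indexed by a natural number so that it is `0`
for `k ≥ N`. -/
def basisVec (N k : ℕ) : Fin N → ℝ := fun i => if (i : ℕ) = k then 1 else 0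

theorem mulVec_basisVec {N : ℕ} (M : Matrix (Fin N) (Fin N) ℝ) (k : Fin N) (i : Fin N) :
    (M *ᵥ basisVec N k) i = M i k := by
  simp [Matrix.mulVec, dotProduct, basisVec, ← Fin.ext_iff]

theorem P_zero : P 0 = 1 := by simp [P]

theorem P_one : P 1 = X := by
  have h : (2 : ℝ[X]) * C (2 : ℝ)⁻¹ = 1 := by
    rw [← map_ofNat C 2, ← C_mul]; norm_num
  simp [P, ← mul_assoc, h]

theorem P_add_two (n : ℕ) : P (n + 2) = X * P (n + 1) - P n := by
  have h : (2 : ℝ[X]) * C (2 : ℝ)⁻¹ = 1 := by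
    rw [← map_ofNat C 2, ← C_mul]; norm_num
  simp [P, Chebyshev.U_add_two, ← mul_assoc, h]

theorem Hl_add_two_apply (N : ℕ) (i j : Fin N) :
    (Hl N + (2 : ℝ) • (1 : Matrix (Fin N) (Fin N) ℝ)) i j =
      if (i : ℕ) = (j : ℕ) + 1 ∨ (j : ℕ) = (i : ℕ) + 1 then 1 else 0 := by
  by_cases h : i = j
  · subst h; simp [Hl]
  · simp [Hl, h]

theorem mulVec_basisVec_zero {N : ℕ} (hN : 1 ≤ N) :
    (Hl N + (2 : ℝ) • (1 : Matrix (Fin N) (Fin N) ℝ)) *ᵥ basisVec N 0 = basisVec N 1 := by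
  ext i
  have h := mulVec_basisVec (Hl N + (2 : ℝ) • (1 : Matrix (Fin N) (Fin N) ℝ)) ⟨0, hN⟩ i
  rw [Hl_add_two_apply] at h
  simpa [basisVec] using h

theorem mulVec_basisVec_succ {N k : ℕ} (hk : k + 1 < N) :
    (Hl N + (2 : ℝ) • (1 : Matrix (Fin N) (Fin N) ℝ)) *ᵥ basisVec N (k + 1) =
      basisVec N (k + 2) + basisVec N k := by
  ext i
  have h := mulVec_basisVec (Hl N + (2 : ℝ) • (1 : Matrix (Fin N) (Fin N) ℝ)) ⟨k + 1, hk⟩ i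
  rw [Hl_add_two_apply] at h
  refine h.trans ?_
  simp only [basisVec, Pi.add_apply]
  split_ifs <;> first | omega | norm_num

/-- The zeroth basis vector is cyclic for the shifted chain matrix, and the polynomials `P n`
carry it through the standard basis. -/
theorem aeval_P_mulVec_basisVec {N : ℕ} : ∀ n : ℕ, n < N →
    aeval (Hl N + (2 : ℝ) • (1 : Matrix (Fin N) (Fin N) ℝ)) (P n) *ᵥ basisVec N 0 = basisVec N n
  | 0, _ => by simp [P_zero]
  | 1, h => by rw [P_one, aeval_X, mulVec_basisVec_zero (by omega)]
  | n + 2, h => by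
    rw [P_add_two, map_sub, map_mul, aeval_X, Matrix.sub_mulVec, ← Matrix.mulVec_mulVec,
      aeval_P_mulVec_basisVec (n + 1) (by omega), aeval_P_mulVec_basisVec n (by omega),
      mulVec_basisVec_succ (by omega), add_sub_cancel_right]

theorem centralizer_of_linear_chain (N : ℕ) (hN : 1 ≤ N)
    (M : Matrix (Fin N) (Fin N) ℝ) :
    M * Hl N = Hl N * M ↔
      ∃ c : Fin N → ℝ,
        M = ∑ n : Fin N,
          c n • Polynomial.aeval (Hl N + (2 : ℝ) • (1 : Matrix (Fin N) (Fin N) ℝ))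
            (P (n : ℕ)) := by
  have hcyc := aeval_P_mulVec_basisVec (N := N)
  have hA : ∀ B : Matrix (Fin N) (Fin N) ℝ,
      B * Hl N = Hl N * B ↔ Commute B (Hl N + (2 : ℝ) • (1 : Matrix (Fin N) (Fin N) ℝ)) := by
    intro B
    simp [Commute, SemiconjBy, mul_add, add_mul]
  rw [hA]
  generalize Hl N + (2 : ℝ) • (1 : Matrix (Fin N) (Fin N) ℝ) = A at hcyc ⊢
  have hpoly : ∀ p q : ℝ[X], Commute (aeval A p) (aeval A q) := fun p q => by
    simp only [Commute, SemiconjBy, ← map_mul, mul_comm]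
  have hsum : ∀ (c : Fin N → ℝ) (p : ℝ[X]),
      Commute (∑ n : Fin N, c n • aeval A (P (n : ℕ))) (aeval A p) := fun c p =>
    Commute.sum_left _ _ _ fun n _ => (hpoly _ p).smul_left _
  constructor
  · intro hM
    have hMp : ∀ p : ℝ[X], Commute M (aeval A p) := fun p => by
      induction p using Polynomial.induction_on' with
      | add p q hp hq => rw [map_add]; exact hp.add_right hq
      | monomial n a =>
        rw [aeval_monomial]
        exact (Algebra.commute_algebraMap_right a M).mul_right (hM.pow_right n)
    refine ⟨fun n => M n ⟨0, hN⟩, ?_⟩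
    set S := ∑ n : Fin N, M n ⟨0, hN⟩ • aeval A (P (n : ℕ)) with hS
    have hzero : M *ᵥ basisVec N 0 = S *ᵥ basisVec N 0 := by
      ext i
      rw [hS, Matrix.sum_mulVec]
      simp only [Matrix.smul_mulVec, hcyc _ (Fin.is_lt _)]
      refine (mulVec_basisVec M ⟨0, hN⟩ i).trans ?_
      simp [basisVec, ← Fin.ext_iff]
    -- Two matrices commuting with `A` and agreeing on the cyclic vector agree on the basis.
    ext i j
    rw [← mulVec_basisVec M j, ← mulVec_basisVec S j, ← hcyc j j.is_lt, Matrix.mulVec_mulVec,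
      Matrix.mulVec_mulVec, (hMp _).eq, (hsum _ _).eq, ← Matrix.mulVec_mulVec, hzero,
      Matrix.mulVec_mulVec]
  · rintro ⟨c, rfl⟩
    simpa using hsum c X
end

section
/- For every N ≥ 1, every N×N real matrix M commuting with the linear chain matrix H_l is symmetric: if M * H_l = H_l * M, then M_{ij} = M_{ji} for all i, j. -/
/-!
Pad `M` with zeros to an array `a` on `ℕ × ℕ`, the entries of `M` sitting at `1 ≤ i, j ≤ N`. On this
square, commutation with the chain matrix is the discrete wave equation
`a (i, j - 1) + a (i, j + 1) = a (i - 1, j) + a (i + 1, j)` (`wave`).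
The antisymmetric part `b (i, j) = a (i, j) - a (j, i)` satisfies the same equation and vanishes on the
main diagonal. If `b` vanishes on the `(d - 1)`-th superdiagonal, then the wave equation on the
`d`-th one says that `b` is constant along the `(d + 1)`-th; for `d = 0` antisymmetry plays the role of
this hypothesis. Each superdiagonal starts on the zero boundary row `i = 0`, so this constant is `0`,
and induction on `d` gives `b = 0`.
-/

open Matrix

/-- The matrix `M` with rows and columns numbered from `1`, extended by zero to all of `ℕ × ℕ`. -/
def padded {N : ℕ} (M : Matrix (Fin N) (Fin N) ℝ) (i j : ℕ) : ℝ :=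
  if h : (1 ≤ i ∧ i ≤ N) ∧ (1 ≤ j ∧ j ≤ N) then
    M ⟨i - 1, by omega⟩ ⟨j - 1, by omega⟩
  else 0

lemma padded_succ {N : ℕ} (M : Matrix (Fin N) (Fin N) ℝ) (i j : Fin N) :
    padded M (i + 1) (j + 1) = M i j := by
  have hi := i.2
  have hj := j.2
  rw [padded, dif_pos (by omega)]
  simp

lemma padded_eq_zero {N : ℕ} (M : Matrix (Fin N) (Fin N) ℝ) {i j : ℕ}
    (h : i = 0 ∨ N < i ∨ j = 0 ∨ N < j) : padded M i j = 0 := by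
  rw [padded, dif_neg (by omega)]

lemma Hl_symm {N : ℕ} (i j : Fin N) : Hl N i j = Hl N j i := by
  simp only [Hl, eq_comm (a := i) (b := j), or_comm]

/-- The chain matrix acts as the discrete Laplacian with Dirichlet boundary conditions at `0` and
`N + 1`. -/
lemma sum_mul_Hl {N : ℕ} (F : ℕ → ℝ) (h0 : F 0 = 0) (hN : F (N + 1) = 0) (j : Fin N) :
    ∑ k : Fin N, F (k + 1) * Hl N k j = F j - 2 * F (j + 1) + F (j + 2) := by
  obtain ⟨j, hj⟩ := j
  let G : ℕ → ℝ := fun n => (if n = j then -2 * F (n + 1) else 0) +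
    (if n = j + 1 then F (n + 1) else 0) + (if n + 1 = j then F (n + 1) else 0)
  have key : ∀ k : Fin N, F (k + 1) * Hl N k ⟨j, hj⟩ = G k := by
    rintro ⟨k, hk⟩
    simp only [G, Hl, Fin.mk.injEq]
    split_ifs <;> first | omega | ring
  have h1 : ∑ n ∈ Finset.range N, (if n = j + 1 then F (n + 1) else 0) = F (j + 2) := by
    rw [Finset.sum_ite_eq']
    split_ifs with h
    · rfl
    · rw [Finset.mem_range] at h
      rw [show j + 2 = N + 1 by omega, hN]
  have h2 : ∑ n ∈ Finset.range N, (if n + 1 = j then F (n + 1) else 0) = F j := by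
    cases j with
    | zero => simp [h0]
    | succ j =>
      simp only [Nat.add_right_cancel_iff]
      rw [Finset.sum_ite_eq', if_pos (Finset.mem_range.2 (by omega))]
  rw [(Finset.sum_congr rfl fun k _ => key k).trans (Fin.sum_univ_eq_sum_range G N),
    Finset.sum_add_distrib, Finset.sum_add_distrib, h1, h2, Finset.sum_ite_eq',
    if_pos (Finset.mem_range.2 hj)]
  ring

/-- The discrete wave equation at the matrix position `(i, j)`, that is, at the padded position
`(i + 1, j + 1)`. -/
lemma wave {N : ℕ} {M : Matrix (Fin N) (Fin N) ℝ} (h : M * Hl N = Hl N * M) {i j : ℕ}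
    (hi : i < N) (hj : j < N) :
    padded M (i + 1) j + padded M (i + 1) (j + 2) =
      padded M i (j + 1) + padded M (i + 2) (j + 1) := by
  have e := congrFun (congrFun h ⟨i, hi⟩) ⟨j, hj⟩
  have e1 := sum_mul_Hl (N := N) (fun n => padded M (i + 1) n)
    (padded_eq_zero M (by omega)) (padded_eq_zero M (by omega)) ⟨j, hj⟩
  have e2 := sum_mul_Hl (N := N) (fun n => padded M n (j + 1))
    (padded_eq_zero M (by omega)) (padded_eq_zero M (by omega)) ⟨i, hi⟩
  have e3 : ∑ k : Fin N, padded M (i + 1) (k + 1) * Hl N k ⟨j, hj⟩ =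
      ∑ k : Fin N, padded M (k + 1) (j + 1) * Hl N k ⟨i, hi⟩ := by
    rw [Matrix.mul_apply, Matrix.mul_apply] at e
    convert e using 2 with k _ k _
    · rw [← padded_succ M ⟨i, hi⟩ k]
    · rw [← padded_succ M k ⟨j, hj⟩, Hl_symm, mul_comm]
  simp only at e1 e2
  linarith

/-- Symmetry along the `d`-th superdiagonal, by strong induction on `d` and induction along the
diagonal. -/
lemma padded_symm {N : ℕ} {M : Matrix (Fin N) (Fin N) ℝ} (h : M * Hl N = Hl N * M) (d : ℕ) :
    ∀ i, padded M i (i + d) = padded M (i + d) i := by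
  induction d using Nat.strong_induction_on with
  | _ d ih =>
    intro i
    induction i with
    | zero => rw [padded_eq_zero M (by omega), padded_eq_zero M (by omega)]
    | succ i ihi =>
      by_cases hN : N < i + 1 + d
      · rw [padded_eq_zero M (by omega), padded_eq_zero M (by omega)]
      · match d with
        | 0 => rfl
        | 1 =>
          have w := wave h (i := i) (j := i) (by omega) (by omega)
          simp only [add_assoc, Nat.reduceAdd] at *
          linarith
        | d + 2 =>
          have w := wave h (i := i) (j := i + d + 1) (by omega) (by omega)
          have w' := wave h (i := i + d + 1) (j := i) (by omega) (by omega)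
          have a1 := ih d (by omega) (i + 1)
          have a2 := ih d (by omega) (i + 2)
          rw [show i + 1 + d = i + d + 1 by omega] at a1
          rw [show i + 2 + d = i + d + 1 + 1 by omega] at a2
          rw [show i + (d + 2) = i + d + 1 + 1 by omega] at ihi
          rw [show i + 1 + (d + 2) = i + d + 1 + 2 by omega]
          linarith

theorem commuting_with_linear_chain_symmetric (N : ℕ) (hN : 1 ≤ N)
    (M : Matrix (Fin N) (Fin N) ℝ) (h : M * Hl N = Hl N * M) :
    ∀ i j, M i j = M j i := by
  intro i j
  rw [← padded_succ M i j, ← padded_succ M j i]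
  rcases le_total (i : ℕ) j with hij | hij
  · obtain ⟨d, hd⟩ := Nat.exists_eq_add_of_le hij
    rw [hd, show (i : ℕ) + d + 1 = i + 1 + d by omega]
    exact padded_symm h d _
  · obtain ⟨d, hd⟩ := Nat.exists_eq_add_of_le hij
    rw [hd, show (j : ℕ) + d + 1 = j + 1 + d by omega]
    exact (padded_symm h d _).symm
end

section
/- For every N ≥ 1, every N×N real matrix M commuting with the linear chain matrix H_l is persymmetric: if M * H_l = H_l * M, then M_{ij} = M_{N+1-j, N+1-i} for all i, j (with 1-based indices). -/
open Matrix

/-!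
The first basis vector `e₀` is cyclic for `Hl`: because `Hl` is tridiagonal with off-diagonal
entries `1`, each `e_k` is `A e₀` for some `A` in the algebra `ℝ[Hl]` (`exists_mem_adjoin_mulVec`).
A matrix commuting with `Hl` commutes with `ℝ[Hl]`, so it is determined by its value at `e₀`;
hence the commutant of `Hl` is exactly `ℝ[Hl]` (`mem_adjoin_of_commute`). The flip across the
antidiagonal is a linear anti-automorphism fixing `Hl`, so it fixes the commutative algebra
`ℝ[Hl]` pointwise (`persymmetric_of_mem_adjoin`).
-/

theorem Hl_mulVec_zero (n : ℕ) (h1 : 1 < n + 1) :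
    Hl (n + 1) *ᵥ Pi.single 0 1 = Pi.single ⟨1, h1⟩ 1 - (2 : ℝ) • Pi.single 0 1 := by
  ext i
  simp only [mulVec_single_one, col_apply, Hl, Pi.sub_apply, Pi.smul_apply, Pi.single_apply,
    Fin.ext_iff, smul_eq_mul, Fin.val_zero, zero_add]
  split_ifs <;> simp_all

theorem Hl_mulVec_succ (N k : ℕ) (h : k + 2 < N) :
    Hl N *ᵥ Pi.single ⟨k + 1, by omega⟩ 1 =
      Pi.single ⟨k + 2, h⟩ 1 - (2 : ℝ) • Pi.single ⟨k + 1, by omega⟩ 1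
        + Pi.single ⟨k, by omega⟩ 1 := by
  ext i
  simp only [mulVec_single_one, col_apply, Hl, Pi.sub_apply, Pi.add_apply, Pi.smul_apply,
    Pi.single_apply, Fin.ext_iff, smul_eq_mul]
  split_ifs <;> first | omega | norm_num

/-- The first basis vector is cyclic for `Hl`. -/
theorem exists_mem_adjoin_mulVec (n k : ℕ) (hk : k < n + 1) :
    ∃ A ∈ Algebra.adjoin ℝ {Hl (n + 1)}, A *ᵥ Pi.single 0 1 = Pi.single ⟨k, hk⟩ 1 := by
  have hH : Hl (n + 1) ∈ Algebra.adjoin ℝ {Hl (n + 1)} := Algebra.self_mem_adjoin_singleton ℝ _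
  induction k using Nat.twoStepInduction with
  | zero => exact ⟨1, one_mem _, one_mulVec _⟩
  | one =>
    refine ⟨Hl (n + 1) + (2 : ℝ) • 1, add_mem hH (Subalgebra.smul_mem _ (one_mem _) _), ?_⟩
    rw [add_mulVec, smul_mulVec, one_mulVec, Hl_mulVec_zero n hk]
    abel
  | more k ih₀ ih₁ =>
    obtain ⟨A, hA, hA'⟩ := ih₀ (by omega)
    obtain ⟨B, hB, hB'⟩ := ih₁ (by omega)
    refine ⟨Hl (n + 1) * B + (2 : ℝ) • B - A,
      sub_mem (add_mem (mul_mem hH hB) (Subalgebra.smul_mem _ hB _)) hA, ?_⟩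
    rw [sub_mulVec, add_mulVec, smul_mulVec, ← mulVec_mulVec, hA', hB', Hl_mulVec_succ _ k hk]
    abel

/-- The commutant of `Hl` is the algebra generated by `Hl`. -/
theorem mem_adjoin_of_commute (n : ℕ) (M : Matrix (Fin (n + 1)) (Fin (n + 1)) ℝ)
    (h : M * Hl (n + 1) = Hl (n + 1) * M) : M ∈ Algebra.adjoin ℝ {Hl (n + 1)} := by
  choose A hA hA' using fun k : Fin (n + 1) => exists_mem_adjoin_mulVec n k k.2
  have hS : ∑ k, M k 0 • A k ∈ Algebra.adjoin ℝ {Hl (n + 1)} :=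
    sum_mem fun k _ => Subalgebra.smul_mem _ (hA k) _
  -- The element of `ℝ[Hl]` with the same value as `M` at `e₀`.
  have hcol : (∑ k, M k 0 • A k) *ᵥ Pi.single 0 1 = M *ᵥ Pi.single 0 1 := by
    ext i
    simp only [sum_mulVec, smul_mulVec, hA', Finset.sum_apply, Pi.smul_apply, Pi.single_apply]
    simp
  suffices M = ∑ k, M k 0 • A k from this ▸ hS
  refine ext_of_mulVec_single fun k => ?_
  have hMA : Commute M (A k) := Algebra.commute_of_mem_adjoin_singleton_of_commute (hA k) h
  have hSA : Commute (∑ k, M k 0 • A k) (A k) :=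
    Algebra.commute_of_mem_adjoin_singleton_of_commute (hA k)
      (Algebra.commute_of_mem_adjoin_self hS).symm
  rw [← hA' k, mulVec_mulVec, mulVec_mulVec, hMA.eq, hSA.eq, ← mulVec_mulVec, ← mulVec_mulVec,
    hcol]

theorem persymmetric_of_mem_adjoin (N : ℕ) (M : Matrix (Fin N) (Fin N) ℝ)
    (h : M ∈ Algebra.adjoin ℝ {Hl N}) : Mᵀ.submatrix Fin.rev Fin.rev = M := by
  induction h using Algebra.adjoin_induction with
  | mem x hx =>
    rw [Set.mem_singleton_iff.1 hx]
    ext i j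
    simp only [submatrix_apply, transpose_apply, Hl, Fin.ext_iff, Fin.val_rev]
    split_ifs <;> first | omega | rfl
  | algebraMap r =>
    ext i j
    simp [algebraMap_matrix_apply, eq_comm]
  | add x y _ _ hx hy => rw [transpose_add, submatrix_add, Pi.add_apply, Pi.add_apply, hx, hy]
  | mul x y hx' hy' hx hy =>
    have hxy : Commute x y := Algebra.commute_of_mem_adjoin_singleton_of_commute hy'
      (Algebra.commute_of_mem_adjoin_self hx').symm
    rw [transpose_mul, ← submatrix_mul_equiv _ _ _ Fin.revPerm]
    change yᵀ.submatrix Fin.rev Fin.rev * xᵀ.submatrix Fin.rev Fin.rev = _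
    rw [hx, hy, hxy.eq]

/-- `M` is persymmetric: `M i j = M (N+1-j) (N+1-i)` in 1-based indexing, which
for `i j : Fin N` (0-based) reads `M i j = M (rev j) (rev i)`. -/
theorem commuting_with_linear_chain_persymmetric (N : ℕ) (hN : 1 ≤ N)
    (M : Matrix (Fin N) (Fin N) ℝ) (h : M * Hl N = Hl N * M) :
    ∀ i j : Fin N, M i j = M j.rev i.rev := by
  intro i j
  obtain ⟨n, rfl⟩ := Nat.exists_eq_add_of_le' hN
  exact (congrFun₂ (persymmetric_of_mem_adjoin _ M (mem_adjoin_of_commute n M h)) i j).symm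
end

section
/- For every N ≥ 1, the space of N×N real matrices commuting with the linear chain matrix H_l (the centralizer of H_l in the matrix algebra) is a real vector space of dimension exactly N. -/
/-!
The first basis vector `e₀` is a cyclic vector for `H = Hl N`: the off-diagonal entries are `1`, so
`(H + 2) e₀ = e₁` and `(H + 2) eₖ₊₁ = eₖ + eₖ₊₂` while the indices stay below `N`. Hence the polynomials in `H` given by the
Chebyshev recursion `P₀ = 1`, `P₁ = H + 2`, `Pₖ₊₂ = (H + 2) Pₖ₊₁ - Pₖ` satisfy `Pₖ e₀ = eₖ` for
`k < N`. Evaluation `M ↦ M e₀` is then a linear isomorphism from the centralizer onto `ℝᴺ`.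
It is injective since `M e₀ = 0` gives `M eₖ = M Pₖ e₀ = Pₖ M e₀ = 0`, and it is surjective since
`∑ vₖ Pₖ` is sent to `v`.
-/

open Matrix

/-- The centralizer of `Hl N`, i.e. the subspace of `N × N` real matrices
commuting with the linear chain matrix. -/
def centralizerHl (N : ℕ) : Submodule ℝ (Matrix (Fin N) (Fin N) ℝ) where
  carrier := {M | M * Hl N = Hl N * M}
  add_mem' := by
    intro a b ha hb
    simp only [Set.mem_setOf_eq] at *
    rw [add_mul, mul_add, ha, hb]
  zero_mem' := by simp
  smul_mem' := by
    intro c M hM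
    simp only [Set.mem_setOf_eq] at *
    rw [Matrix.smul_mul, Matrix.mul_smul, hM]

/-- There is a matrix in the bicommutant of `Hl (n + 1)` sending `e₀` to `eₖ`, namely the
Chebyshev-type polynomial `Pₖ` in `Hl (n + 1)`. -/
lemma exists_bicommutant_mulVec_single (n k : ℕ) (hk : k < n + 1) :
    ∃ P : Matrix (Fin (n + 1)) (Fin (n + 1)) ℝ,
      (∀ M, Commute M (Hl (n + 1)) → Commute M P) ∧
      P *ᵥ Pi.single 0 1 = Pi.single ⟨k, hk⟩ 1 := by
  induction k using Nat.twoStepInduction with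
  | zero => exact ⟨1, fun M _ => Commute.one_right M, Matrix.one_mulVec _⟩
  | one =>
    refine ⟨Hl (n + 1) + (2 : ℕ), fun M h => h.add_right (Nat.commute_cast M 2), ?_⟩
    rw [Matrix.add_mulVec, Matrix.natCast_mulVec, Matrix.mulVec_single_one]
    ext i
    simp only [Pi.add_apply, Pi.smul_apply, Matrix.col_apply, Hl, Pi.single_apply, Fin.ext_iff,
      Fin.val_zero, smul_eq_mul]
    split_ifs <;> grind
  | more k ih₀ ih₁ =>
    obtain ⟨P₀, hc₀, hP₀⟩ := ih₀ (by omega)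
    obtain ⟨P₁, hc₁, hP₁⟩ := ih₁ (by omega)
    refine ⟨(Hl (n + 1) + (2 : ℕ)) * P₁ - P₀, fun M h =>
      ((h.add_right (Nat.commute_cast M 2)).mul_right (hc₁ M h)).sub_right (hc₀ M h), ?_⟩
    rw [Matrix.sub_mulVec, ← Matrix.mulVec_mulVec, hP₀, hP₁, Matrix.add_mulVec,
      Matrix.natCast_mulVec, Matrix.mulVec_single_one]
    ext i
    simp only [Pi.add_apply, Pi.sub_apply, Pi.smul_apply, Matrix.col_apply, Hl, Pi.single_apply,
      Fin.ext_iff, smul_eq_mul]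
    split_ifs <;> first | omega | norm_num

theorem centralizer_finrank (N : ℕ) (hN : 1 ≤ N) :
    Module.finrank ℝ (centralizerHl N) = N := by
  obtain ⟨n, rfl⟩ : ∃ n, N = n + 1 := ⟨N - 1, by omega⟩
  choose P hcomm hP using fun k : Fin (n + 1) => exists_bicommutant_mulVec_single n k k.isLt
  let ev : centralizerHl (n + 1) →ₗ[ℝ] (Fin (n + 1) → ℝ) :=
    { toFun := fun M => M.1 *ᵥ Pi.single 0 1
      map_add' := fun A B => Matrix.add_mulVec A.1 B.1 _
      map_smul' := fun c A => Matrix.smul_mulVec c A.1 _ }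
  have hinj : Function.Injective ev := by
    rw [injective_iff_map_eq_zero]
    rintro ⟨M, hM⟩ h0
    replace h0 : M *ᵥ Pi.single 0 1 = 0 := h0
    have hcol (k : Fin (n + 1)) : M *ᵥ Pi.single k 1 = 0 := by
      have hk := hP k
      rw [Fin.eta] at hk
      rw [← hk, Matrix.mulVec_mulVec, (hcomm k M hM).eq, ← Matrix.mulVec_mulVec, h0,
        Matrix.mulVec_zero]
    refine Subtype.ext ?_
    ext i k
    simpa using congrFun (hcol k) i
  have hsurj : Function.Surjective ev := by
    intro v
    have hmem (k : Fin (n + 1)) : P k ∈ centralizerHl (n + 1) :=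
      (hcomm k _ (Commute.refl _)).symm.eq
    refine ⟨∑ k, v k • ⟨P k, hmem k⟩, ?_⟩
    have hev (k : Fin (n + 1)) : ev ⟨P k, hmem k⟩ = Pi.single k 1 := hP k
    simp only [map_sum, map_smul, hev]
    exact (pi_eq_sum_univ' v).symm
  rw [(LinearEquiv.ofBijective ev ⟨hinj, hsurj⟩).finrank_eq, Module.finrank_fin_fun]
end

section
/- For every N ≥ 1, the (real) eigenvalues of the linear chain matrix H_l are exactly the numbers λ_k = 2·(cos(kπ/(N+1)) - 1) = -4·sin²(kπ/(2(N+1))) for k = 1, 2, …, N; that is, a real number λ is an eigenvalue of H_l if and only if λ = -4·sin²(kπ/(2(N+1))) for some k ∈ {1, …, N}. -/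
/-!
Extend a vector `x` on the chain by zero to both ends, as a sequence `y` with `y 0 = y (N + 1) = 0`.
Then `H_l` acts as the second difference (`Hl_mulVec`), so `H_l x = μ x` says that `y` satisfies the
recurrence `y (n + 2) = 2 c y (n + 1) - y n` with `c = 1 + μ / 2`. This is the recurrence of the
Chebyshev polynomials of the second kind, hence `y (n + 1) = U n (c) * y 1`, and the boundary
condition at `N + 1` turns into `U N (c) = 0` (`eigenvalue_iff_U_eval_eq_zero`). The roots of `U N`
are the numbers `cos (k π / (N + 1))` for `1 ≤ k ≤ N` (`Polynomial.Chebyshev.roots_U_real`), and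
`2 (cos θ - 1) = -4 sin² (θ / 2)`.
-/

open Matrix Real

/-- On sequences vanishing at both ends `0` and `N + 1` of the chain, `Hl N` is the second
difference. -/
lemma Hl_mulVec (N : ℕ) (y : ℕ → ℝ) (h0 : y 0 = 0) (hN : y (N + 1) = 0) (i : Fin N) :
    (Hl N).mulVec (fun j => y (j + 1)) i = y i - 2 * y (i + 1) + y (i + 2) := by
  obtain ⟨i, hi⟩ := i
  have key : (Hl N).mulVec (fun j => y (j + 1)) ⟨i, hi⟩ = ∑ j ∈ Finset.range N,
      ((if i = j then -2 * y (j + 1) else 0) + (if i = j + 1 then y (j + 1) else 0)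
        + (if i + 1 = j then y (j + 1) else 0)) := by
    rw [Finset.sum_range, Matrix.mulVec, dotProduct]
    refine Finset.sum_congr rfl fun j _ => ?_
    simp only [Hl, Fin.ext_iff]
    grind
  have left : (∑ j ∈ Finset.range N, if i = j + 1 then y (j + 1) else 0) = y i := by
    cases i with
    | zero => simp [h0]
    | succ k =>
      simp only [Nat.add_right_cancel_iff, Finset.sum_ite_eq, Finset.mem_range]
      rw [if_pos (by omega)]
  have right : (∑ j ∈ Finset.range N, if i + 1 = j then y (j + 1) else 0) = y (i + 2) := by
    rw [Finset.sum_ite_eq]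
    split_ifs with h
    · rfl
    · have : i + 2 = N + 1 := by
        rw [Finset.mem_range] at h
        omega
      rw [this, hN]
  rw [key, Finset.sum_add_distrib, Finset.sum_add_distrib, left, right, Finset.sum_ite_eq,
    if_pos (Finset.mem_range.2 hi)]
  ring

lemma eigenvalue_iff_U_eval_eq_zero (N : ℕ) (hN : 1 ≤ N) (μ : ℝ) :
    (∃ x : Fin N → ℝ, x ≠ 0 ∧ (Hl N).mulVec x = μ • x) ↔
      (Polynomial.Chebyshev.U ℝ N).eval (1 + μ / 2) = 0 := by
  have rec_U (n : ℤ) : (Polynomial.Chebyshev.U ℝ (n + 1)).eval (1 + μ / 2) =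
      (2 + μ) * (Polynomial.Chebyshev.U ℝ n).eval (1 + μ / 2)
        - (Polynomial.Chebyshev.U ℝ (n - 1)).eval (1 + μ / 2) := by
    rw [Polynomial.Chebyshev.U_add_one]
    simp only [Polynomial.eval_sub, Polynomial.eval_mul, Polynomial.eval_X, Polynomial.eval_ofNat]
    ring
  constructor
  · rintro ⟨x, hx, hμ⟩
    let y : ℕ → ℝ := fun n => if h : 0 < n ∧ n ≤ N then x ⟨n - 1, by omega⟩ else 0
    have hy0 : y 0 = 0 := by simp [y]
    have hyN : y (N + 1) = 0 := by simp [y]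
    have hxy : x = fun j : Fin N => y (j + 1) := by
      funext j
      simp [y, j.isLt]
    have rec_y (n : ℕ) (hn : n < N) : y (n + 2) = (2 + μ) * y (n + 1) - y n := by
      have h := congrFun hμ ⟨n, hn⟩
      rw [hxy, Hl_mulVec N y hy0 hyN] at h
      simp only [Pi.smul_apply, smul_eq_mul] at h
      linarith
    -- Indexing `U` by `n - 1 : ℤ` covers the left boundary value, since `U (-1) = 0`.
    have hU (n : ℕ) : n ≤ N →
        y n = (Polynomial.Chebyshev.U ℝ (n - 1)).eval (1 + μ / 2) * y 1 ∧
        y (n + 1) = (Polynomial.Chebyshev.U ℝ n).eval (1 + μ / 2) * y 1 := by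
      induction n with
      | zero => simp [hy0]
      | succ k ih =>
        intro hk
        obtain ⟨h1, h2⟩ := ih (by omega)
        push_cast
        refine ⟨by simpa using h2, ?_⟩
        rw [rec_y k (by omega), rec_U, h1, h2]
        ring
    have hy1 : y 1 ≠ 0 := by
      intro h
      apply hx
      rw [hxy]
      funext j
      simp [(hU j j.isLt.le).2, h]
    have := (hU N le_rfl).2
    rw [hyN] at this
    exact (mul_eq_zero.1 this.symm).resolve_right hy1
  · intro h
    let y : ℕ → ℝ := fun n => (Polynomial.Chebyshev.U ℝ ((n : ℤ) - 1)).eval (1 + μ / 2)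
    refine ⟨fun j => y (j + 1), fun h0 => ?_, ?_⟩
    · have := congrFun h0 ⟨0, hN⟩
      simp [y] at this
    · funext i
      rw [Hl_mulVec N y (by simp [y]) (by simpa [y] using h)]
      have := rec_U i
      simp only [y, Pi.smul_apply, smul_eq_mul]
      push_cast
      rw [show ((i : ℕ) : ℤ) + 2 - 1 = i + 1 by ring, add_sub_cancel_right, this]
      ring

theorem linear_chain_eigenvalues (N : ℕ) (hN : 1 ≤ N) (μ : ℝ) :
    (∃ x : Fin N → ℝ, x ≠ 0 ∧ (Hl N).mulVec x = μ • x) ↔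
      ∃ k : ℕ, 1 ≤ k ∧ k ≤ N ∧
        μ = -4 * Real.sin ((k : ℝ) * Real.pi / (2 * (N + 1))) ^ 2 := by
  rw [eigenvalue_iff_U_eval_eq_zero N hN]
  have half_angle (k : ℕ) : -4 * Real.sin ((k : ℝ) * Real.pi / (2 * (N + 1))) ^ 2 =
      2 * (Real.cos (k * Real.pi / (N + 1)) - 1) := by
    rw [show (k : ℝ) * Real.pi / (N + 1) = 2 * (k * Real.pi / (2 * (N + 1))) by field_simp,
      Real.cos_two_mul, Real.cos_sq']
    ring
  have hU : Polynomial.Chebyshev.U ℝ N ≠ 0 := Polynomial.Chebyshev.U_ne_zero ℝ N (by omega)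
  rw [← Polynomial.IsRoot.def, ← Polynomial.mem_roots hU, Polynomial.Chebyshev.roots_U_real,
    Finset.mem_val, Finset.mem_image]
  simp only [half_angle, Finset.mem_range]
  constructor
  · rintro ⟨k, hk, h⟩
    refine ⟨k + 1, by omega, by omega, ?_⟩
    push_cast
    linarith
  · rintro ⟨k, h1, hk, h⟩
    refine ⟨k - 1, by omega, ?_⟩
    rw [Nat.cast_sub h1, Nat.cast_one, sub_add_cancel]
    linarith
end
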